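/- arXiv:2004.13231 — 2 statements merged into one kernel-verified Lean document; each statement's English description precedes it below -/
import Mathlib

section
/- For every nonconstant total Boolean function f : {0,1}^n → {0,1}, the single-bit spectral adversary equals the spectral sensitivity: SA₁(f) = λ(f). -/
/-!
The matrix `Γ ∘ D_i` keeps exactly the entries of `Γ` in direction `i`. Each entry of a matrix is at
most its spectral norm (`abs_entry_le_specNorm`), so with `M = max_i ‖Γ ∘ D_i‖` an admissible `Γ`
satisfies `0 ≤ Γ ≤ M • A_f` entrywise. The spectral norm is monotone on entrywise nonnegative
matrices (`specNorm_mono`), whence `‖Γ‖ ≤ M ‖A_f‖` and `SA₁(f) ≤ λ(f)`.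

Conversely `Γ = A_f` is admissible. Each `A_f ∘ D_i` is a submatrix of the permutation matrix of
`x ↦ x ⊕ e_i`, so its norm is at most `1` (`specNorm_adjMat_hadamard_le`); at least one of these norms
is positive because a nonconstant `f` has a sensitive edge (`exists_sensitive`). Hence the ratio
for `A_f` is at least `λ(f)`.
-/

/-- Flip bit `i` of the Boolean string `x`. -/
def flipBit {n : ℕ} (x : Fin n → Bool) (i : Fin n) : Fin n → Bool :=
  Function.update x i (!x i)

/-- Sensitivity of `f` at input `x`. -/
def sensAt {n : ℕ} (f : (Fin n → Bool) → Bool) (x : Fin n → Bool) : ℕ :=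
  (Finset.univ.filter fun i : Fin n => f (flipBit x i) ≠ f x).card

/-- (Maximum) sensitivity of `f`. -/
def sens {n : ℕ} (f : (Fin n → Bool) → Bool) : ℕ :=
  Finset.univ.sup (sensAt f)

/-- `b`-sensitivity of `f`: max sensitivity over inputs with value `b` (0 if none). -/
def sensB {n : ℕ} (f : (Fin n → Bool) → Bool) (b : Bool) : ℕ :=
  (Finset.univ.filter fun x => f x = b).sup (sensAt f)

/-- Adjacency matrix of the sensitivity graph of `f`. -/
def adjMat {n : ℕ} (f : (Fin n → Bool) → Bool) :
    Matrix (Fin n → Bool) (Fin n → Bool) ℝ :=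
  fun x y => if (∃ i, y = flipBit x i) ∧ f x ≠ f y then 1 else 0

/-- Spectral norm (ℓ₂ operator norm) of a real matrix. -/
noncomputable def specNorm {m k : Type*} [Fintype m] [Fintype k] [DecidableEq k]
    (M : Matrix m k ℝ) : ℝ :=
  ‖LinearMap.toContinuousLinearMap (Matrix.toEuclideanLin M)‖

/-- Spectral sensitivity of `f`. -/
noncomputable def specSens {n : ℕ} (f : (Fin n → Bool) → Bool) : ℝ :=
  specNorm (adjMat f)

/-- Degree of `f`: minimal total degree of a real polynomial representing `f` on `{0,1}^n`. -/
noncomputable def bdeg {n : ℕ} (f : (Fin n → Bool) → Bool) : ℕ :=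
  sInf {d | ∃ p : MvPolynomial (Fin n) ℝ, p.totalDegree = d ∧
    ∀ x : Fin n → Bool,
      MvPolynomial.eval (fun i => if x i then (1 : ℝ) else 0) p
        = if f x then 1 else 0}

/-- The matrix `D_i`, with `D_i[x,y] = 1` iff `x` and `y` differ in bit `i`. -/
def Dmat {n : ℕ} (i : Fin n) : Matrix (Fin n → Bool) (Fin n → Bool) ℝ :=
  fun x y => if x i ≠ y i then 1 else 0

/-- Single-bit spectral adversary bound. -/
noncomputable def SA1 {n : ℕ} (f : (Fin n → Bool) → Bool) : ℝ :=
  sSup {r | ∃ Γ : Matrix (Fin n → Bool) (Fin n → Bool) ℝ,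
    Γ.IsSymm ∧ (∀ x y, 0 ≤ Γ x y) ∧ Γ ≠ 0 ∧
    (∀ x y, (f x = f y ∨ hammingDist x y ≠ 1) → Γ x y = 0) ∧
    r = specNorm Γ / ⨆ i : Fin n, specNorm (Matrix.hadamard Γ (Dmat i))}

section SpecNorm

variable {m k : Type*} [Fintype m] [Fintype k] [DecidableEq k]

lemma specNorm_nonneg (M : Matrix m k ℝ) : 0 ≤ specNorm M := norm_nonneg _

lemma specNorm_le {M : Matrix m k ℝ} {c : ℝ} (hc : 0 ≤ c)
    (h : ∀ v : k → ℝ, ‖WithLp.toLp 2 (M.mulVec v)‖ ≤ c * ‖WithLp.toLp 2 v‖) :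
    specNorm M ≤ c :=
  ContinuousLinearMap.opNorm_le_bound _ hc fun v => h v.ofLp

lemma norm_mulVec_le_specNorm (M : Matrix m k ℝ) (v : k → ℝ) :
    ‖WithLp.toLp 2 (M.mulVec v)‖ ≤ specNorm M * ‖WithLp.toLp 2 v‖ :=
  ContinuousLinearMap.le_opNorm
    (LinearMap.toContinuousLinearMap (Matrix.toEuclideanLin M)) (WithLp.toLp 2 v)

lemma norm_toLp_mono {v w : m → ℝ} (h : ∀ i, |v i| ≤ |w i|) :
    ‖WithLp.toLp 2 v‖ ≤ ‖WithLp.toLp 2 w‖ := by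
  rw [EuclideanSpace.norm_eq, EuclideanSpace.norm_eq]
  refine Real.sqrt_le_sqrt (Finset.sum_le_sum fun i _ => ?_)
  exact pow_le_pow_left₀ (norm_nonneg _) (h i) 2

lemma abs_entry_le_specNorm (M : Matrix m k ℝ) (i : m) (j : k) : |M i j| ≤ specNorm M := by
  have h := norm_mulVec_le_specNorm M (Pi.single j 1)
  have h1 : ‖WithLp.toLp 2 (Pi.single j (1 : ℝ) : k → ℝ)‖ = 1 := by
    simp
  have h2 := PiLp.norm_apply_le (WithLp.toLp 2 (M.mulVec (Pi.single j 1))) i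
  rw [h1, mul_one] at h
  have h3 := h2.trans h
  simpa using h3

/-- Entrywise `|P v| ≤ Q |v|`, and `|v|` has the same norm as `v`, so
`‖P v‖ ≤ ‖Q |v|‖ ≤ ‖Q‖ ‖v‖`. -/
lemma specNorm_mono {P Q : Matrix m k ℝ} (h0 : ∀ i j, 0 ≤ P i j) (h : ∀ i j, P i j ≤ Q i j) :
    specNorm P ≤ specNorm Q := by
  refine specNorm_le (specNorm_nonneg Q) fun v => ?_
  calc ‖WithLp.toLp 2 (P.mulVec v)‖
      ≤ ‖WithLp.toLp 2 (Q.mulVec fun j => |v j|)‖ := by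
        refine norm_toLp_mono fun i => le_trans ?_ (le_abs_self _)
        simp only [Matrix.mulVec, dotProduct]
        refine (Finset.abs_sum_le_sum_abs _ _).trans (Finset.sum_le_sum fun j _ => ?_)
        rw [abs_mul, abs_of_nonneg (h0 i j)]
        exact mul_le_mul_of_nonneg_right (h i j) (abs_nonneg _)
    _ ≤ specNorm Q * ‖WithLp.toLp 2 fun j => |v j|‖ := norm_mulVec_le_specNorm _ _
    _ ≤ specNorm Q * ‖WithLp.toLp 2 v‖ :=
        mul_le_mul_of_nonneg_left (norm_toLp_mono fun j => (abs_abs _).le) (specNorm_nonneg Q)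

lemma specNorm_smul_le {c : ℝ} (hc : 0 ≤ c) (M : Matrix m k ℝ) :
    specNorm (c • M) ≤ c * specNorm M := by
  refine specNorm_le (mul_nonneg hc (specNorm_nonneg M)) fun v => ?_
  rw [Matrix.smul_mulVec, WithLp.toLp_smul, norm_smul, Real.norm_of_nonneg hc, mul_assoc]
  exact mul_le_mul_of_nonneg_left (norm_mulVec_le_specNorm M v) hc

end SpecNorm

section Cube

variable {n : ℕ}

lemma flipBit_self (x : Fin n → Bool) (i : Fin n) : flipBit x i i = !x i := by
  simp [flipBit]

lemma flipBit_of_ne (x : Fin n → Bool) {i j : Fin n} (h : j ≠ i) : flipBit x i j = x j := by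
  simp [flipBit, h]

lemma flipBit_involutive (i : Fin n) : Function.Involutive fun x : Fin n → Bool => flipBit x i := by
  intro x
  simp [flipBit]

lemma hammingDist_eq_one_iff (x y : Fin n → Bool) :
    hammingDist x y = 1 ↔ ∃ i, y = flipBit x i := by
  unfold hammingDist
  rw [Finset.card_eq_one]
  refine exists_congr fun i => ⟨fun h => funext fun j => ?_, fun h => ?_⟩
  · have hj : x j ≠ y j ↔ j = i := by simpa using Finset.ext_iff.mp h j
    rcases eq_or_ne j i with rfl | hne
    · rw [flipBit_self]
      exact Bool.eq_not_iff.mpr (hj.mpr rfl).symm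
    · rw [flipBit_of_ne x hne]
      by_contra hc
      exact hne (hj.mp (Ne.symm hc))
  · subst h
    ext j
    rcases eq_or_ne j i with rfl | hne
    · simp [flipBit_self]
    · simp [flipBit_of_ne x hne, hne]

/-- If no bit flip changes `f`, replacing the bits of `x` by those of `y` one at a time
shows that `f` is constant. -/
lemma exists_sensitive {f : (Fin n → Bool) → Bool} (hf : ∃ x y, f x ≠ f y) :
    ∃ x i, f x ≠ f (flipBit x i) := by
  by_contra! hc
  obtain ⟨x, y, hxy⟩ := hf
  have key : ∀ s : Finset (Fin n), f (fun i => if i ∈ s then y i else x i) = f x := by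
    intro s
    induction s using Finset.induction_on with
    | empty => simp
    | insert a s ha ih =>
      set z : Fin n → Bool := fun i => if i ∈ s then y i else x i with hz
      have hupd : (fun i => if i ∈ insert a s then y i else x i) = Function.update z a (y a) := by
        funext j
        rcases eq_or_ne j a with rfl | hne
        · simp
        · simp [hz, hne]
      rw [hupd, ← ih]
      by_cases h : y a = z a
      · rw [h, Function.update_eq_self]
      · rw [Bool.eq_not_iff.mpr h]
        exact (hc z a).symm
  have := key Finset.univ
  simp only [Finset.mem_univ, if_true] at this
  exact hxy this.symm

lemma adjMat_nonneg (f : (Fin n → Bool) → Bool) (x y : Fin n → Bool) : 0 ≤ adjMat f x y := by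
  unfold adjMat
  split_ifs <;> norm_num

lemma adjMat_isSymm (f : (Fin n → Bool) → Bool) : (adjMat f).IsSymm := by
  ext x y
  simp only [Matrix.transpose_apply, adjMat, ← hammingDist_eq_one_iff, hammingDist_comm y x,
    ne_comm (a := f y)]

lemma adjMat_hadamard_apply (f : (Fin n → Bool) → Bool) (i : Fin n) (x y : Fin n → Bool) :
    Matrix.hadamard (adjMat f) (Dmat i) x y =
      if y = flipBit x i ∧ f x ≠ f y then 1 else 0 := by
  have h : ((∃ j, y = flipBit x j) ∧ f x ≠ f y) ∧ x i ≠ y i ↔ y = flipBit x i ∧ f x ≠ f y := by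
    constructor
    · rintro ⟨⟨⟨j, rfl⟩, hf⟩, hi⟩
      have : i = j := by
        by_contra hne
        exact hi (flipBit_of_ne x hne).symm
      subst this
      exact ⟨rfl, hf⟩
    · rintro ⟨rfl, hf⟩
      exact ⟨⟨⟨i, rfl⟩, hf⟩, by simp [flipBit_self]⟩
  simp only [Matrix.hadamard_apply, adjMat, Dmat, ← h]
  split_ifs <;> simp_all

lemma specNorm_adjMat_hadamard_le (f : (Fin n → Bool) → Bool) (i : Fin n) :
    specNorm (Matrix.hadamard (adjMat f) (Dmat i)) ≤ 1 := by
  refine specNorm_le zero_le_one fun v => ?_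
  rw [one_mul]
  -- Flipping bit `i` permutes the coordinates of `v`, which preserves its norm.
  have hperm : ‖WithLp.toLp 2 fun x => v (flipBit x i)‖ = ‖WithLp.toLp 2 v‖ := by
    rw [EuclideanSpace.norm_eq, EuclideanSpace.norm_eq]
    congr 1
    exact Equiv.sum_comp (flipBit_involutive i).toPerm fun x => ‖v x‖ ^ 2
  rw [← hperm]
  refine norm_toLp_mono fun x => ?_
  have hx : (Matrix.hadamard (adjMat f) (Dmat i)).mulVec v x =
      if f x ≠ f (flipBit x i) then v (flipBit x i) else 0 := by
    simp only [Matrix.mulVec, dotProduct]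
    rw [Finset.sum_eq_single (flipBit x i)]
    · rw [adjMat_hadamard_apply]
      simp
    · intro y _ hy
      rw [adjMat_hadamard_apply]
      simp [hy]
    · simp
  rw [hx]
  split_ifs <;> simp

end Cube

/-- For every nonconstant total Boolean function `f`, the single-bit spectral
adversary equals the spectral sensitivity: `SA₁(f) = λ(f)`. -/
theorem sa1_eq_specSens {n : ℕ} (f : (Fin n → Bool) → Bool)
    (hf : ∃ x y, f x ≠ f y) :
    SA1 f = specSens f := by
  have hbdd (Γ : Matrix (Fin n → Bool) (Fin n → Bool) ℝ) :
      BddAbove (Set.range fun i : Fin n => specNorm (Matrix.hadamard Γ (Dmat i))) :=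
    (Set.finite_range _).bddAbove
  have hub : ∀ r ∈ {r | ∃ Γ : Matrix (Fin n → Bool) (Fin n → Bool) ℝ,
      Γ.IsSymm ∧ (∀ x y, 0 ≤ Γ x y) ∧ Γ ≠ 0 ∧
      (∀ x y, (f x = f y ∨ hammingDist x y ≠ 1) → Γ x y = 0) ∧
      r = specNorm Γ / ⨆ i : Fin n, specNorm (Matrix.hadamard Γ (Dmat i))},
      r ≤ specSens f := by
    rintro r ⟨Γ, -, hnn, -, hsupp, rfl⟩
    have hM : 0 ≤ ⨆ i : Fin n, specNorm (Matrix.hadamard Γ (Dmat i)) :=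
      Real.iSup_nonneg fun i => specNorm_nonneg _
    refine div_le_of_le_mul₀ hM (specNorm_nonneg _) ?_
    rw [mul_comm]
    refine le_trans (specNorm_mono hnn fun x y => ?_) (specNorm_smul_le hM (adjMat f))
    rw [Matrix.smul_apply, smul_eq_mul]
    by_cases h : f x = f y ∨ hammingDist x y ≠ 1
    · rw [hsupp x y h]
      exact mul_nonneg hM (adjMat_nonneg f x y)
    · push Not at h
      obtain ⟨hne, hd⟩ := h
      have hd' := (hammingDist_eq_one_iff x y).mp hd
      have hA : adjMat f x y = 1 := if_pos ⟨hd', hne⟩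
      obtain ⟨i, rfl⟩ := hd'
      have hD : Matrix.hadamard Γ (Dmat i) x (flipBit x i) = Γ x (flipBit x i) := by
        simp [Dmat, flipBit_self]
      rw [hA, mul_one, ← hD]
      exact ((le_abs_self _).trans (abs_entry_le_specNorm _ _ _)).trans (le_ciSup (hbdd Γ) i)
  obtain ⟨x, i, hxi⟩ := exists_sensitive hf
  have hne : adjMat f ≠ 0 := by
    intro h
    have h1 : adjMat f x (flipBit x i) = 1 := if_pos ⟨⟨i, rfl⟩, hxi⟩
    simp [h] at h1
  have hsupp : ∀ x y, (f x = f y ∨ hammingDist x y ≠ 1) → adjMat f x y = 0 := by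
    intro x y h
    rw [Ne, hammingDist_eq_one_iff] at h
    exact if_neg (by tauto)
  have hpos : 0 < ⨆ i : Fin n, specNorm (Matrix.hadamard (adjMat f) (Dmat i)) := by
    have h1 := abs_entry_le_specNorm (Matrix.hadamard (adjMat f) (Dmat i)) x (flipBit x i)
    rw [adjMat_hadamard_apply, if_pos ⟨rfl, hxi⟩, abs_one] at h1
    exact lt_of_lt_of_le one_pos (h1.trans (le_ciSup (hbdd (adjMat f)) i))
  have hle : ⨆ i : Fin n, specNorm (Matrix.hadamard (adjMat f) (Dmat i)) ≤ 1 :=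
    Real.iSup_le (fun i => specNorm_adjMat_hadamard_le f i) zero_le_one
  refine le_antisymm (Real.sSup_le hub (specNorm_nonneg _)) ?_
  refine le_trans ?_ (le_csSup ⟨_, hub⟩
    ⟨adjMat f, adjMat_isSymm f, adjMat_nonneg f, hne, hsupp, rfl⟩)
  exact le_div_self (specNorm_nonneg _) hpos hle
end

section
/- For every nonconstant total Boolean function f : {0,1}^n → {0,1}, the single-bit minimax adversary equals the spectral sensitivity: MM₁(f) = λ(f). -/
/-- A feasible weight scheme for the single-bit minimax adversary: nonnegative, and
whenever `x`, `y` differ exactly in coordinate `i` and `f(x) ≠ f(y)`, we require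
`w(x,i)·w(y,i) ≥ 1`. -/
def MMFeasible {n : ℕ} (f : (Fin n → Bool) → Bool)
    (w : (Fin n → Bool) → Fin n → ℝ) : Prop :=
  (∀ x i, 0 ≤ w x i) ∧
    ∀ x y (i : Fin n), f x ≠ f y → y = flipBit x i → 1 ≤ w x i * w y i

/-- Single-bit minimax adversary bound. -/
noncomputable def MM1 {n : ℕ} (f : (Fin n → Bool) → Bool) : ℝ :=
  sInf {r | ∃ w : (Fin n → Bool) → Fin n → ℝ, MMFeasible f w ∧
    r = ⨆ x : Fin n → Bool, ∑ i : Fin n, w x i}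

lemma flipBit_flipBit {n : ℕ} (x : Fin n → Bool) (i : Fin n) :
    flipBit (flipBit x i) i = x := by
  simp [flipBit]

lemma flipBit_injective {n : ℕ} (x : Fin n → Bool) : Function.Injective (flipBit x) := by
  intro i j h
  by_contra hij
  have := congrFun h i
  simp [flipBit, Function.update_of_ne hij] at this

lemma sum_flipBit {n : ℕ} (i : Fin n) (g : (Fin n → Bool) → ℝ) :
    ∑ x, g (flipBit x i) = ∑ x, g x :=
  Equiv.sum_comp (Function.Involutive.toPerm (fun x => flipBit x i)
    (fun x => flipBit_flipBit x i)) g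

/-- The operator on Euclidean space given by the adjacency matrix of the sensitivity graph. -/
noncomputable def adjOp {n : ℕ} (f : (Fin n → Bool) → Bool) :
    EuclideanSpace ℝ (Fin n → Bool) →L[ℝ] EuclideanSpace ℝ (Fin n → Bool) :=
  LinearMap.toContinuousLinearMap (Matrix.toEuclideanLin (adjMat f))

lemma specSens_eq_norm {n : ℕ} (f : (Fin n → Bool) → Bool) : specSens f = ‖adjOp f‖ := rfl

lemma adjOp_apply {n : ℕ} (f : (Fin n → Bool) → Bool)
    (v : EuclideanSpace ℝ (Fin n → Bool)) (x : Fin n → Bool) :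
    adjOp f v x = ∑ i, if f x ≠ f (flipBit x i) then v (flipBit x i) else 0 := by
  have h : adjOp f v x = ∑ y, adjMat f x y * v y := rfl
  rw [h, ← Finset.sum_image (s := Finset.univ) (g := flipBit x)
    (f := fun y => if f x ≠ f y then v y else 0) (flipBit_injective x).injOn]
  symm
  rw [← Finset.sum_subset (Finset.subset_univ _)]
  · refine Finset.sum_congr rfl fun y hy => ?_
    obtain ⟨i, -, rfl⟩ := Finset.mem_image.1 hy
    simp [adjMat]
  · intro y _ hy
    have : ¬ ∃ i, y = flipBit x i := by
      rintro ⟨i, rfl⟩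
      exact hy (Finset.mem_image_of_mem _ (Finset.mem_univ i))
    simp [adjMat, this]

/-- Every feasible weight function bounds the spectral sensitivity: row-wise Cauchy–Schwarz,
with the entry `1` of each sensitive edge bounded by `w(x,i) * w(x⊕eᵢ,i)`. -/
lemma specSens_le {n : ℕ} {f : (Fin n → Bool) → Bool} {w : (Fin n → Bool) → Fin n → ℝ}
    (hw : MMFeasible f w) {r : ℝ} (hr : ∀ x, ∑ i, w x i ≤ r) : specSens f ≤ r := by
  have hr0 : 0 ≤ r := (Finset.sum_nonneg fun i _ => hw.1 (fun _ => false) i).trans (hr _)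
  rw [specSens_eq_norm]
  refine ContinuousLinearMap.opNorm_le_bound _ hr0 fun v => ?_
  refine le_of_sq_le_sq ?_ (by positivity)
  have row (x : Fin n → Bool) :
      (adjOp f v x) ^ 2 ≤ r * ∑ i, v (flipBit x i) ^ 2 * w (flipBit x i) i := by
    have nn (i : Fin n) : 0 ≤ v (flipBit x i) ^ 2 * w (flipBit x i) i :=
      mul_nonneg (sq_nonneg _) (hw.1 _ _)
    rw [adjOp_apply]
    refine (Finset.sum_sq_le_sum_mul_sum_of_sq_le_mul _ (fun i _ => hw.1 x i)
      (fun i _ => nn i) fun i _ => ?_).trans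
      (mul_le_mul_of_nonneg_right (hr x) (Finset.sum_nonneg fun i _ => nn i))
    split_ifs with h
    · have := mul_le_mul_of_nonneg_left (hw.2 x _ i h rfl) (sq_nonneg (v (flipBit x i)))
      linarith
    · simpa using mul_nonneg (hw.1 x i) (nn i)
  calc ‖adjOp f v‖ ^ 2 = ∑ x, (adjOp f v x) ^ 2 := EuclideanSpace.real_norm_sq_eq _
    _ ≤ ∑ x, r * ∑ i, v (flipBit x i) ^ 2 * w (flipBit x i) i :=
        Finset.sum_le_sum fun x _ => row x
    _ = r * ∑ x, v x ^ 2 * ∑ i, w x i := by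
        rw [← Finset.mul_sum, Finset.sum_comm]
        rw [Finset.sum_congr rfl fun i _ => sum_flipBit i fun y => v y ^ 2 * w y i,
          Finset.sum_comm]
        simp_rw [Finset.mul_sum]
    _ ≤ r * ∑ x, v x ^ 2 * r := by
        gcongr with x
        exact hr x
    _ = (r * ‖v‖) ^ 2 := by
        rw [← Finset.sum_mul, mul_pow, EuclideanSpace.real_norm_sq_eq]
        ring

/-- Above the spectral norm the nonnegative matrix `A` has an entrywise positive vector with
`A u ≤ μ u`. No connectivity is needed, as it would be for a Perron eigenvector at `μ = λ(f)`
itself. -/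
lemma exists_pos_subeigenvector {n : ℕ} (f : (Fin n → Bool) → Bool) {μ : ℝ}
    (hμ : specSens f < μ) :
    ∃ u : EuclideanSpace ℝ (Fin n → Bool), (∀ x, 0 < u x) ∧ ∀ x, adjOp f u x ≤ μ * u x := by
  rw [specSens_eq_norm] at hμ
  have hμ0 : 0 < μ := (norm_nonneg _).trans_lt hμ
  -- `μ - A` is positive definite.
  have pd (v : EuclideanSpace ℝ (Fin n → Bool))
      (hv : ∑ x, v x * (μ * v x - adjOp f v x) ≤ 0) : v = 0 := by
    have h1 : ∑ x, v x * adjOp f v x ≤ ‖adjOp f‖ * ‖v‖ ^ 2 := by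
      have h : ∑ x, v x * adjOp f v x = inner ℝ v (adjOp f v) := by
        simp [PiLp.inner_apply, mul_comm]
      rw [h]
      have := (real_inner_le_norm v (adjOp f v)).trans
        (mul_le_mul_of_nonneg_left ((adjOp f).le_opNorm v) (norm_nonneg v))
      linarith
    have h2 : ∑ x, v x * (μ * v x - adjOp f v x) = μ * ‖v‖ ^ 2 - ∑ x, v x * adjOp f v x := by
      rw [EuclideanSpace.real_norm_sq_eq, Finset.mul_sum, ← Finset.sum_sub_distrib]
      exact Finset.sum_congr rfl fun x _ => by ring
    have h3 : (μ - ‖adjOp f‖) * ‖v‖ ^ 2 ≤ 0 := by linarith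
    have h4 : ‖v‖ ^ 2 ≤ 0 := nonpos_of_mul_nonpos_right h3 (sub_pos.2 hμ)
    exact norm_eq_zero.1 (pow_eq_zero_iff two_ne_zero |>.1 (le_antisymm h4 (sq_nonneg _)))
  let L : EuclideanSpace ℝ (Fin n → Bool) →ₗ[ℝ] EuclideanSpace ℝ (Fin n → Bool) :=
    μ • LinearMap.id - (adjOp f).toLinearMap
  have hL (v : EuclideanSpace ℝ (Fin n → Bool)) (x : Fin n → Bool) :
      L v x = μ * v x - adjOp f v x := rfl
  have inj : Function.Injective L := by
    refine (injective_iff_map_eq_zero L).2 fun v hv => pd v (le_of_eq ?_)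
    simp_rw [← hL, hv]
    simp
  obtain ⟨u, hu⟩ := LinearMap.injective_iff_surjective.1 inj (WithLp.toLp 2 fun _ => 1)
  have hu' (x : Fin n → Bool) : μ * u x - adjOp f u x = 1 := by rw [← hL, hu]
  -- Test the equation `(μ - A) u = 1` against the negative part `m` of `u`. Here
  -- `A u + A m ≥ 0` because `u + m ≥ 0`, so `m x * ((μ - A) m) x ≤ -m x` at every `x`.
  let m : EuclideanSpace ℝ (Fin n → Bool) := WithLp.toLp 2 fun x => max (-u x) 0
  have hm (x) : m x = max (-u x) 0 := rfl
  have hm0 : m = 0 := by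
    refine pd m (Finset.sum_nonpos fun x _ => ?_)
    have hA : 0 ≤ adjOp f u x + adjOp f m x := by
      rw [adjOp_apply, adjOp_apply, ← Finset.sum_add_distrib]
      refine Finset.sum_nonneg fun i _ => ?_
      split_ifs
      · have := le_max_left (-u (flipBit x i)) 0
        rw [hm]
        linarith
      · simp
    rcases le_total 0 (u x) with h | h
    · have : m x = 0 := by rw [hm]; exact max_eq_right (by linarith)
      simp [this]
    · have h' : m x = -u x := by rw [hm]; exact max_eq_left (by linarith)
      have := hu' x
      exact mul_nonpos_of_nonneg_of_nonpos (by linarith) (by rw [h']; linarith)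
  have hu0 (x : Fin n → Bool) : 0 ≤ u x := by
    have h : m x = 0 := by rw [hm0]; rfl
    have := le_max_left (-u x) 0
    rw [← hm, h] at this
    linarith
  have hA (x : Fin n → Bool) : 0 ≤ adjOp f u x := by
    rw [adjOp_apply]
    refine Finset.sum_nonneg fun i _ => ?_
    split_ifs
    · exact hu0 _
    · exact le_rfl
  refine ⟨u, fun x => ?_, fun x => by linarith [hu' x]⟩
  have : 0 < μ * u x := by linarith [hu' x, hA x]
  exact (mul_pos_iff_of_pos_left hμ0).1 this

lemma exists_feasible {n : ℕ} (f : (Fin n → Bool) → Bool) {μ : ℝ} (hμ : specSens f < μ) :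
    ∃ w, MMFeasible f w ∧ ∀ x, ∑ i, w x i ≤ μ := by
  obtain ⟨u, hu, hA⟩ := exists_pos_subeigenvector f hμ
  refine ⟨fun x i => (if f x ≠ f (flipBit x i) then u (flipBit x i) else 0) / u x,
    ⟨fun x i => ?_, ?_⟩, fun x => ?_⟩
  · refine div_nonneg ?_ (hu x).le
    split_ifs
    · exact (hu _).le
    · exact le_rfl
  · rintro x y i h rfl
    have h1 := (hu x).ne'
    have h2 := (hu (flipBit x i)).ne'
    simp only [flipBit_flipBit, if_pos h, if_pos h.symm]
    field_simp
    exact le_rfl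
  · rw [← Finset.sum_div, ← adjOp_apply, div_le_iff₀ (hu x)]
    exact hA x

/-- For every nonconstant total Boolean function `f`, the single-bit minimax
adversary equals the spectral sensitivity: `MM₁(f) = λ(f)`. -/
theorem mm1_eq_specSens {n : ℕ} (f : (Fin n → Bool) → Bool)
    (hf : ∃ x y, f x ≠ f y) :
    MM1 f = specSens f := by
  have lower : ∀ r ∈ {r | ∃ w : (Fin n → Bool) → Fin n → ℝ, MMFeasible f w ∧
      r = ⨆ x : Fin n → Bool, ∑ i : Fin n, w x i}, specSens f ≤ r := by
    rintro r ⟨w, hw, rfl⟩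
    exact specSens_le hw fun x =>
      le_ciSup (f := fun x => ∑ i, w x i) (Set.finite_range _).bddAbove x
  refine le_antisymm (le_of_forall_gt_imp_ge_of_dense fun μ hμ => ?_) ?_
  · obtain ⟨w, hw, h⟩ := exists_feasible f hμ
    exact (csInf_le ⟨_, lower⟩ ⟨w, hw, rfl⟩).trans (ciSup_le h)
  · obtain ⟨w, hw, -⟩ := exists_feasible f (lt_add_one (specSens f))
    exact le_csInf ⟨_, w, hw, rfl⟩ lower
end
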